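/- For λ, μ ∈ P_n, the coefficient c_{λ,n}^μ(y) in the expansion s_λ(x_{(n)}|y) = Σ_{μ∈P_n} c_{λ,n}^μ(y) s_μ(x_{(n)}) is given by the determinantal formula c_{λ,n}^μ(y) = det( e_{λ_i − μ_j − i + j}(y_1,…,y_{λ_i+n−i}) )_{1≤i,j≤n}, where e_r denotes the r-th elementary symmetric polynomial (with e_0 = 1, e_r = 0 for r < 0 or r exceeding the number of variables). -/

import Mathlib

open Finset MvPolynomial

attribute [local instance] Classical.propDecidable

/-- A partition in `P_n`: a weakly decreasing sequence of naturals. -/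
def IsPartition {n : ℕ} (lam : Fin n → ℕ) : Prop := Antitone lam

/-- The cells of the Young diagram of `lam`, as pairs (row, column), 0-based. -/
noncomputable def cells {n : ℕ} (lam : Fin n → ℕ) : Finset (Fin n × ℕ) :=
  (Finset.univ ×ˢ Finset.range (Finset.univ.sup lam)).filter fun c => c.2 < lam c.1

/-- Semistandardness for a filling with values in `Fin n` (0-based values):
rows weakly increase, columns strictly increase. -/
def IsSSYT {n : ℕ} (lam : Fin n → ℕ) (T : cells lam → Fin n) : Prop :=
  (∀ c d : cells lam, (c : Fin n × ℕ).1 = (d : Fin n × ℕ).1 →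
      (c : Fin n × ℕ).2 ≤ (d : Fin n × ℕ).2 → T c ≤ T d) ∧
  (∀ c d : cells lam, (c : Fin n × ℕ).2 = (d : Fin n × ℕ).2 →
      (c : Fin n × ℕ).1 < (d : Fin n × ℕ).1 → T c < T d)

/-- The y-subscript `a + c(a) - r(a)` of a cell (1-based value and coordinates). -/
def ysub {n : ℕ} (a : Fin n) (c : Fin n × ℕ) : ℤ := (a : ℤ) + 1 + (c.2 : ℤ) - ((c.1 : ℕ) : ℤ)

/-- The Schur polynomial `s_lam(x_{(n)})`, in the ring with `x`-variables
`Sum.inl i` and `y`-variables `Sum.inr k` (`y_k` for `k ≥ 1`). -/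
noncomputable def schurN (n : ℕ) (lam : Fin n → ℕ) : MvPolynomial (Fin n ⊕ ℤ) ℤ :=
  ∑ T ∈ Finset.univ.filter (IsSSYT lam), ∏ c : cells lam, X (Sum.inl (T c))

/-- The factorial Schur polynomial `s_lam(x_{(n)} | y)`. -/
noncomputable def factSchurN (n : ℕ) (lam : Fin n → ℕ) : MvPolynomial (Fin n ⊕ ℤ) ℤ :=
  ∑ T ∈ Finset.univ.filter (IsSSYT lam),
    ∏ c : cells lam,
      (X (Sum.inl (T c)) + X (Sum.inr (ysub (T c) (c : Fin n × ℕ))))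

/-- `e_d(y_1, …, y_p)`, the elementary symmetric polynomial in the variables
`y_1, …, y_p` (which is `0` for `d < 0` and for `d > p`, and `1` for `d = 0`),
as a polynomial in the variables `y_k`, `k : ℤ`. -/
noncomputable def eY (p : ℕ) (d : ℤ) : MvPolynomial ℤ ℤ :=
  if 0 ≤ d then
    ∑ s ∈ Finset.powersetCard d.toNat ((Finset.range p).image fun k => (k + 1 : ℤ)),
      ∏ j ∈ s, X j
  else 0

/-- `h_d(-y_1, …, -y_p)`, the complete homogeneous symmetric polynomial of degree
`d` evaluated at the negated variables `-y_1, …, -y_p` (and `0` for `d < 0`). -/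
noncomputable def hYneg (p : ℕ) (d : ℤ) : MvPolynomial ℤ ℤ :=
  if 0 ≤ d then
    ∑ m ∈ (Finset.range p).sym d.toNat,
      ((m : Multiset ℕ).map fun k => -(X (k + 1 : ℤ) : MvPolynomial ℤ ℤ)).prod
  else 0

/-- The partition `λ^c ∈ P_m` complementary to `λ ∈ P_n` in the `n × m` rectangle:
`λ^c_i = n - λ'_{m+1-i}` (1-based), where `λ'_j = #{k : λ_k ≥ j}` is the conjugate. -/
noncomputable def conjComp (n m : ℕ) (lam : Fin n → ℕ) : Fin m → ℕ :=
  fun i => n - (Finset.univ.filter fun k : Fin n => m - (i : ℕ) ≤ lam k).card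

/-!
Write `(x|y)^p = (x + y_1) ⋯ (x + y_p)`, `δ = (n - 1, …, 1, 0)` and `Δ = ∏_{j < i} (x_j - x_i)`.
The bialternant formula `Δ · s_λ(x|y) = det ((x_j|y)^{λ_i + n - i})` follows by induction on `n`:
removing the largest entries of a tableau is the branching rule for `s_λ(x|y)`, and row reduction
followed by expansion along the last column gives the same recursion for the determinant.
For `y = 0` the formula shows that `x^{μ + δ}` occurs in `Δ · s_ν(x)` only for `ν = μ`, with
coefficient `1`. So `c_{λ,n}^μ(y)` is the coefficient of `x^{μ + δ}` in
`det ((x_j|y)^{λ_i + n - i})`, which is read off entrywise, since the coefficient of `x^k` in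
`(x|y)^p` is `e_{p - k}(y_1, …, y_p)`.
-/

section FactorialPowers

variable {A : Type*} [CommSemiring A]

/-- The quotient `(x|y)^b / (x|y)^a = (x + y_{a+1}) ⋯ (x + y_b)` of factorial powers, where
`(x|y)^p = (x + y_1) ⋯ (x + y_p)`; it is `1` when `b ≤ a`. -/
def factProd (y : ℤ → A) (x : A) (a b : ℕ) : A := ∏ k ∈ Ico a b, (x + y (k + 1))

/-- The factorial power `(x|y)^p = (x + y_1) ⋯ (x + y_p)`. -/
abbrev factPow (y : ℤ → A) (x : A) (p : ℕ) : A := factProd y x 0 p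

lemma factProd_self (y : ℤ → A) (x : A) (a : ℕ) : factProd y x a a = 1 := by
  simp [factProd]

lemma factProd_succ_right (y : ℤ → A) (x : A) {a b : ℕ} (hab : a ≤ b) :
    factProd y x a (b + 1) = factProd y x a b * (x + y (b + 1)) :=
  prod_Ico_succ_top hab _

lemma factPow_const_zero (x : A) (p : ℕ) : factPow (fun _ => 0) x p = x ^ p := by
  simp [factProd]

lemma map_factPow {B : Type*} [CommSemiring B] (f : A →+* B) (y : ℤ → A) (x : A) (p : ℕ) :
    f (factPow y x p) = factPow (fun k => f (y k)) (f x) p := by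
  simp [factProd, map_prod]

end FactorialPowers

section Alternants

variable {A : Type*} [CommRing A] {n : ℕ}

/-- The congruence `(x|y)^p / (x|y)^q ≡ (z|y)^p / (z|y)^q` modulo `x - z`, multiplied by `(x|y)^q`
and with its quotient made explicit. -/
lemma factPow_eq_sub_mul_sum_add (y : ℤ → A) (x z : A) {q p : ℕ} (hqp : q ≤ p) :
    factPow y x p =
      (x - z) * ∑ m ∈ Ico q p, factProd y z (m + 1) p * factPow y x m
        + factProd y z q p * factPow y x q := by
  induction p, hqp using Nat.le_induction with
  | base => simp [factProd_self]
  | succ p hqp ih =>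
    have quotient_succ : ∑ m ∈ Ico q (p + 1), factProd y z (m + 1) (p + 1) * factPow y x m =
        (z + y (p + 1)) * (∑ m ∈ Ico q p, factProd y z (m + 1) p * factPow y x m)
          + factPow y x p := by
      rw [sum_Ico_succ_top hqp, factProd_self, one_mul, mul_sum]
      congr 1
      refine sum_congr rfl fun m hm => ?_
      rw [factProd_succ_right y z (mem_Ico.1 hm).2]
      ring
    rw [quotient_succ, factProd_succ_right y z hqp, factPow, factProd_succ_right y x p.zero_le]
    linear_combination (z + y (p + 1)) * ih

lemma det_eq_of_forall_row_eq_smul_add_succ {M B : Matrix (Fin (n + 1)) (Fin (n + 1)) A}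
    (c : Fin n → A) (h_last : ∀ j, M (Fin.last n) j = B (Fin.last n) j)
    (h_castSucc : ∀ (i : Fin n) j, M i.castSucc j = B i.castSucc j + c i * M i.succ j) :
    M.det = B.det := by
  rw [← Matrix.det_submatrix_equiv_self Fin.revPerm M,
    ← Matrix.det_submatrix_equiv_self Fin.revPerm B]
  refine Matrix.det_eq_of_forall_row_eq_smul_add_pred (fun i => c i.rev)
    (fun j => by simp [h_last]) fun i j => ?_
  simp only [Matrix.submatrix_apply, Fin.revPerm_apply, Fin.rev_succ, Fin.rev_castSucc]
  exact h_castSucc _ _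

lemma det_succ_of_last_col {B : Matrix (Fin (n + 1)) (Fin (n + 1)) A}
    (hB : ∀ i : Fin n, B i.castSucc (Fin.last n) = 0) :
    B.det = B (Fin.last n) (Fin.last n) * (B.submatrix Fin.castSucc Fin.castSucc).det := by
  rw [Matrix.det_succ_column B (Fin.last n), Fin.sum_univ_castSucc,
    sum_eq_zero fun i _ => by rw [hB i]; ring]
  simp [Fin.succAbove_last, Even.neg_one_pow ⟨n, rfl⟩]

lemma det_of_sum_mul {ι κ : Type*} [Fintype ι] [DecidableEq ι] (s : ι → Finset κ)
    (a : ι → κ → A) (b : κ → ι → A) :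
    (Matrix.of fun i j => ∑ m ∈ s i, a i m * b m j).det =
      ∑ m ∈ Fintype.piFinset s, (∏ i, a i (m i)) * (Matrix.of fun i => b (m i)).det := by
  have row_eq_sum : (Matrix.of fun i j => ∑ m ∈ s i, a i m * b m j) =
      fun i => ∑ m ∈ s i, fun j => a i m * b m j := by
    ext i j
    simp
  rw [row_eq_sum]
  refine (Matrix.detRowAlternating.toMultilinearMap.map_sum_finset
    (fun i m j => a i m * b m j) s).trans (sum_congr rfl fun m _ => ?_)
  rw [← Matrix.det_mul_column]
  rfl

/-- The alternant `a_l(x|y) = det ((x_j|y)^{l_i})`. -/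
def factAlternant (y : ℤ → A) (x : Fin n → A) (l : Fin n → ℕ) : A :=
  (Matrix.of fun i j => factPow y (x j) (l i)).det

/-- Peeling off the last variable. Subtracting from each row a multiple of the next one clears the
last column above its last entry, and leaves the remaining entries of column `j` above the last row
divisible by `x_j - x_n`. -/
lemma factAlternant_succ (y : ℤ → A) (x : Fin (n + 1) → A) {l : Fin (n + 1) → ℕ}
    (hl : Antitone l) :
    factAlternant y x l = (∏ j, (Fin.init x j - x (Fin.last n))) *
      ∑ m ∈ Fintype.piFinset fun i : Fin n => Ico (l i.succ) (l i.castSucc),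
        (factPow y (x (Fin.last n)) (l (Fin.last n)) *
          ∏ i : Fin n, factProd y (x (Fin.last n)) (m i + 1) (l i.castSucc)) *
        factAlternant y (Fin.init x) m := by
  set z := x (Fin.last n) with hz
  let quotient (i : Fin n) (w : A) : A :=
    ∑ m ∈ Ico (l i.succ) (l i.castSucc), factProd y z (m + 1) (l i.castSucc) * factPow y w m
  let reduced : Matrix (Fin (n + 1)) (Fin (n + 1)) A := Matrix.of fun i j =>
    Fin.snoc (α := fun _ => A) (fun i => (x j - z) * quotient i (x j))
      (factPow y (x j) (l (Fin.last n))) i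
  have det_eq_reduced : factAlternant y x l = reduced.det :=
    det_eq_of_forall_row_eq_smul_add_succ (fun i => factProd y z (l i.succ) (l i.castSucc))
      (fun j => by simp [reduced])
      fun i j => by
        simpa [reduced] using factPow_eq_sub_mul_sum_add y (x j) z (hl i.castSucc_le_succ)
  have minor_eq : reduced.submatrix Fin.castSucc Fin.castSucc =
      Matrix.of fun i j => (Fin.init x j - z) *
        (Matrix.of fun i j => quotient i (Fin.init x j)) i j := by
    ext i j
    simp [reduced, Fin.init]
  rw [det_eq_reduced, det_succ_of_last_col fun i => by simp [reduced, ← hz], minor_eq,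
    Matrix.det_mul_row, det_of_sum_mul _ _ fun m j => factPow y (Fin.init x j) m,
    show reduced (Fin.last n) (Fin.last n) = factPow y z (l (Fin.last n)) by simp [reduced, hz],
    mul_left_comm, mul_sum]
  simp only [mul_assoc, factAlternant]

/-- The Vandermonde product `∏_{j < i} (x_j - x_i)`. -/
def vandermondeProd (x : Fin n → A) : A := ∏ i, ∏ j ∈ Iio i, (x j - x i)

lemma vandermondeProd_succ (x : Fin (n + 1) → A) :
    vandermondeProd x =
      (∏ j, (Fin.init x j - x (Fin.last n))) * vandermondeProd (Fin.init x) := by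
  rw [vandermondeProd, Fin.prod_univ_castSucc, mul_comm]
  simp [vandermondeProd, Fin.init, Fin.prod_Iio_castSucc, Fin.Iio_last_eq_map]

end Alternants

section Tableaux

variable {n : ℕ}

lemma mem_cells {lam : Fin n → ℕ} {c : Fin n × ℕ} : c ∈ cells lam ↔ c.2 < lam c.1 := by
  simp only [cells, mem_filter, mem_product, mem_univ, true_and, mem_range, and_iff_right_iff_imp]
  exact fun h => h.trans_le (le_sup (f := lam) (mem_univ c.1))

lemma prod_cells {A : Type*} [CommMonoid A] (lam : Fin n → ℕ) (f : Fin n × ℕ → A) :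
    ∏ c : cells lam, f c = ∏ i, ∏ k ∈ range (lam i), f (i, k) := by
  rw [prod_coe_sort (cells lam) f]
  exact prod_finset_product _ _ _ fun c => by simp [mem_cells]

lemma IsSSYT.row_le {lam : Fin n → ℕ} (hlam : IsPartition lam) {T : cells lam → Fin n}
    (hT : IsSSYT lam T) (c : cells lam) : (c : Fin n × ℕ).1 ≤ T c := by
  obtain ⟨⟨i, k⟩, hc⟩ := c
  induction i using WellFoundedLT.induction with
  | ind i ih =>
    refine le_of_forall_lt fun j hji => ?_
    have hjk : (j, k) ∈ cells lam := mem_cells.2 ((mem_cells.1 hc).trans_le (hlam hji.le))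
    exact (ih j hji hjk).trans_lt (hT.2 ⟨_, hjk⟩ ⟨_, hc⟩ rfl hji)

/-- The sequences `nu` interlacing with `lam`: `lam_{i+1} ≤ nu_i ≤ lam_i` for all `i`. -/
def interlacing (lam : Fin (n + 1) → ℕ) : Finset (Fin n → ℕ) :=
  Fintype.piFinset fun i => Icc (lam i.succ) (lam i.castSucc)

lemma mem_interlacing {lam : Fin (n + 1) → ℕ} {nu : Fin n → ℕ} :
    nu ∈ interlacing lam ↔ ∀ i, lam i.succ ≤ nu i ∧ nu i ≤ lam i.castSucc := by
  simp [interlacing]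

/-- The sequence `(nu_1, …, nu_n, 0)`. -/
def appendZero (nu : Fin n → ℕ) : Fin (n + 1) → ℕ := Fin.snoc (α := fun _ => ℕ) nu 0

@[simp]
lemma appendZero_castSucc (nu : Fin n → ℕ) (i : Fin n) : appendZero nu i.castSucc = nu i :=
  Fin.snoc_castSucc (α := fun _ => ℕ) ..

@[simp]
lemma appendZero_last (nu : Fin n → ℕ) : appendZero nu (Fin.last n) = 0 :=
  Fin.snoc_last (α := fun _ => ℕ) ..

variable {lam : Fin (n + 1) → ℕ} {nu : Fin n → ℕ}

lemma isPartition_of_mem_interlacing (hnu : nu ∈ interlacing lam) : IsPartition nu := by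
  cases n with
  | zero => exact fun i => i.elim0
  | succ n =>
    rw [mem_interlacing] at hnu
    exact Fin.antitone_iff_succ_le.2 fun i => (hnu i.succ).2.trans (hnu i.castSucc).1

/-- The shape formed by the non-maximal entries of a tableau: `innerShape T i` is the column of the
first maximal entry of row `i` (or the row length if there is none). -/
noncomputable def innerShape (T : cells lam → Fin (n + 1)) (i : Fin n) : ℕ :=
  sInf {k | ∀ h : (i.castSucc, k) ∈ cells lam, T ⟨_, h⟩ = Fin.last n}

lemma rowLength_mem_setOf_eq_last (T : cells lam → Fin (n + 1)) (i : Fin n) :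
    lam i.castSucc ∈ {k | ∀ h : (i.castSucc, k) ∈ cells lam, T ⟨_, h⟩ = Fin.last n} :=
  fun h => absurd (mem_cells.1 h) (lt_irrefl _)

lemma apply_innerShape_eq_last (T : cells lam → Fin (n + 1)) (i : Fin n)
    (h : (i.castSucc, innerShape T i) ∈ cells lam) : T ⟨_, h⟩ = Fin.last n :=
  Nat.sInf_mem ⟨_, rowLength_mem_setOf_eq_last T i⟩ h

lemma innerShape_mem_interlacing (hlam : IsPartition lam) {T : cells lam → Fin (n + 1)}
    (hT : IsSSYT lam T) : innerShape T ∈ interlacing lam := by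
  refine mem_interlacing.2 fun i => ⟨?_, Nat.sInf_le (rowLength_mem_setOf_eq_last T i)⟩
  by_contra! hlt
  have h_below : (i.succ, innerShape T i) ∈ cells lam := mem_cells.2 hlt
  have h_above : (i.castSucc, innerShape T i) ∈ cells lam :=
    mem_cells.2 (hlt.trans_le (hlam i.castSucc_le_succ))
  have lt_last := hT.2 ⟨_, h_above⟩ ⟨_, h_below⟩ rfl i.castSucc_lt_succ
  rw [apply_innerShape_eq_last T i h_above] at lt_last
  exact lt_last.not_ge (Fin.le_last _)

lemma IsSSYT.apply_ne_last_iff (hlam : IsPartition lam) {T : cells lam → Fin (n + 1)}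
    (hT : IsSSYT lam T) (c : cells lam) :
    T c ≠ Fin.last n ↔ c.1.2 < appendZero (innerShape T) c.1.1 := by
  obtain ⟨⟨i, k⟩, hc⟩ := c
  induction i using Fin.lastCases with
  | last => simpa using (Fin.last_le_iff.1 (hT.row_le hlam ⟨_, hc⟩))
  | cast i =>
    rw [ne_eq, appendZero_castSucc, ← not_le, not_iff_not]
    refine ⟨fun h => Nat.sInf_le fun _ => h, fun hk => Fin.last_le_iff.1 ?_⟩
    have h_first : (i.castSucc, innerShape T i) ∈ cells lam :=
      mem_cells.2 (hk.trans_lt (mem_cells.1 hc))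
    exact (apply_innerShape_eq_last T i h_first).symm.trans_le (hT.1 ⟨_, h_first⟩ ⟨_, hc⟩ rfl hk)

/-- The inclusion of Young diagrams `nu ⊆ lam` when `nu` interlaces with `lam`. -/
def inclCell (hnu : nu ∈ interlacing lam) (c : cells nu) : cells lam :=
  ⟨(c.1.1.castSucc, c.1.2),
    mem_cells.2 ((mem_cells.1 c.2).trans_le (mem_interlacing.1 hnu c.1.1).2)⟩

lemma inclCell_injective (hnu : nu ∈ interlacing lam) : Function.Injective (inclCell hnu) := by
  rintro ⟨⟨i, k⟩, _⟩ ⟨⟨j, l⟩, _⟩ h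
  simpa [inclCell] using h

lemma mem_range_inclCell (hnu : nu ∈ interlacing lam) {c : cells lam} :
    c ∈ Set.range (inclCell hnu) ↔ c.1.2 < appendZero nu c.1.1 := by
  constructor
  · rintro ⟨d, rfl⟩
    simpa [inclCell] using mem_cells.1 d.2
  · obtain ⟨⟨i, k⟩, hc⟩ := c
    induction i using Fin.lastCases with
    | last => simp
    | cast i => exact fun h => ⟨⟨(i, k), mem_cells.2 (by simpa using h)⟩, rfl⟩

lemma mem_range_inclCell_of_row_lt (hlam : IsPartition lam) (hnu : nu ∈ interlacing lam)
    {c d : cells lam} (hcol : c.1.2 = d.1.2) (hrow : c.1.1 < d.1.1) :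
    c ∈ Set.range (inclCell hnu) := by
  obtain ⟨⟨i, k⟩, hc⟩ := c
  induction i using Fin.lastCases with
  | last => exact absurd hrow (Fin.le_last _).not_gt
  | cast i =>
    have hk : k < lam d.1.1 := hcol.trans_lt (mem_cells.1 d.2)
    rw [mem_range_inclCell, appendZero_castSucc]
    exact hk.trans_le ((hlam (Fin.castSucc_lt_iff_succ_le.1 hrow)).trans
      (mem_interlacing.1 hnu i).1)

/-- The filling of `lam` that extends a filling of `nu ⊆ lam` by the maximal entry. -/
noncomputable def extendTableau (hnu : nu ∈ interlacing lam) (T : cells nu → Fin n) :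
    cells lam → Fin (n + 1) :=
  Function.extend (inclCell hnu) (fun c => (T c).castSucc) fun _ => Fin.last n

lemma extendTableau_inclCell (hnu : nu ∈ interlacing lam) (T : cells nu → Fin n) (c : cells nu) :
    extendTableau hnu T (inclCell hnu c) = (T c).castSucc :=
  (inclCell_injective hnu).extend_apply _ _ c

lemma extendTableau_of_notMem (hnu : nu ∈ interlacing lam) (T : cells nu → Fin n) {c : cells lam}
    (hc : c ∉ Set.range (inclCell hnu)) : extendTableau hnu T c = Fin.last n :=
  Function.extend_apply' _ _ c hc

lemma extendTableau_injective (hnu : nu ∈ interlacing lam) :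
    Function.Injective (extendTableau hnu) := fun T T' h => funext fun c => by
  simpa [extendTableau_inclCell] using congrFun h (inclCell hnu c)

lemma extendTableau_ne_last_iff (hnu : nu ∈ interlacing lam) (T : cells nu → Fin n)
    (c : cells lam) : extendTableau hnu T c ≠ Fin.last n ↔ c ∈ Set.range (inclCell hnu) := by
  refine ⟨not_imp_comm.1 (extendTableau_of_notMem hnu T), ?_⟩
  rintro ⟨d, rfl⟩
  rw [extendTableau_inclCell]
  exact Fin.castSucc_ne_last _

lemma isSSYT_extendTableau_iff (hlam : IsPartition lam) (hnu : nu ∈ interlacing lam)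
    {T : cells nu → Fin n} : IsSSYT lam (extendTableau hnu T) ↔ IsSSYT nu T := by
  constructor
  · refine fun h => ⟨fun c d hrow hcol => ?_, fun c d hcol hrow => ?_⟩
    · simpa [extendTableau_inclCell] using
        h.1 (inclCell hnu c) (inclCell hnu d) (congrArg Fin.castSucc hrow) hcol
    · simpa [extendTableau_inclCell] using
        h.2 (inclCell hnu c) (inclCell hnu d) hcol (Fin.castSucc_lt_castSucc_iff.2 hrow)
  · refine fun h => ⟨fun c d hrow hcol => ?_, fun c d hcol hrow => ?_⟩
    · by_cases hd : d ∈ Set.range (inclCell hnu)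
      · have hc : c ∈ Set.range (inclCell hnu) := by
          rw [mem_range_inclCell] at hd ⊢
          rw [hrow]
          exact hcol.trans_lt hd
        obtain ⟨c, rfl⟩ := hc
        obtain ⟨d, rfl⟩ := hd
        rw [extendTableau_inclCell, extendTableau_inclCell, Fin.castSucc_le_castSucc_iff]
        exact h.1 c d (Fin.castSucc_injective _ hrow) hcol
      · rw [extendTableau_of_notMem hnu T hd]
        exact Fin.le_last _
    · obtain ⟨c, rfl⟩ := mem_range_inclCell_of_row_lt hlam hnu hcol hrow
      rw [extendTableau_inclCell]
      by_cases hd : d ∈ Set.range (inclCell hnu)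
      · obtain ⟨d, rfl⟩ := hd
        rw [extendTableau_inclCell, Fin.castSucc_lt_castSucc_iff]
        exact h.2 c d hcol (Fin.castSucc_lt_castSucc_iff.1 hrow)
      · rw [extendTableau_of_notMem hnu T hd]
        exact Fin.castSucc_lt_last _

lemma innerShape_extendTableau (hnu : nu ∈ interlacing lam) (T : cells nu → Fin n) :
    innerShape (extendTableau hnu T) = nu := by
  funext i
  have eq_last_iff (k : ℕ) (hk : (i.castSucc, k) ∈ cells lam) :
      extendTableau hnu T ⟨_, hk⟩ = Fin.last n ↔ nu i ≤ k := by
    rw [← not_iff_not, ← ne_eq, extendTableau_ne_last_iff, mem_range_inclCell, appendZero_castSucc,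
      not_le]
  refine le_antisymm (Nat.sInf_le fun hk => (eq_last_iff _ hk).2 le_rfl) ?_
  refine le_csInf ⟨_, rowLength_mem_setOf_eq_last _ i⟩ fun k hk => ?_
  by_contra! hlt
  have hcell : (i.castSucc, k) ∈ cells lam :=
    mem_cells.2 (hlt.trans_le (mem_interlacing.1 hnu i).2)
  exact hlt.not_ge ((eq_last_iff k hcell).1 (hk hcell))

lemma exists_extendTableau_eq (hlam : IsPartition lam) (hnu : nu ∈ interlacing lam)
    {T : cells lam → Fin (n + 1)} (hT : IsSSYT lam T) (hshape : innerShape T = nu) :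
    ∃ T' : cells nu → Fin n, extendTableau hnu T' = T := by
  subst hshape
  have ne_last_iff (c : cells lam) :
      T c ≠ Fin.last n ↔ c ∈ Set.range (inclCell hnu) := by
    rw [hT.apply_ne_last_iff hlam, mem_range_inclCell]
  choose T' hT' using fun c => Fin.exists_castSucc_eq.2 ((ne_last_iff _).2 ⟨c, rfl⟩)
  refine ⟨T', funext fun c => ?_⟩
  by_cases hc : c ∈ Set.range (inclCell hnu)
  · obtain ⟨c, rfl⟩ := hc
    rw [extendTableau_inclCell, hT']
  · rw [extendTableau_of_notMem hnu T' hc]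
    exact (not_not.1 (mt (ne_last_iff c).1 hc)).symm

end Tableaux

section Branching

variable {A : Type*} [CommSemiring A] {n : ℕ} {lam : Fin (n + 1) → ℕ} {nu : Fin n → ℕ}

/-- The factorial Schur polynomial `s_lam(x|y)` evaluated in an arbitrary commutative semiring. -/
noncomputable def factorialSchur (y : ℤ → A) (x : Fin n → A) (lam : Fin n → ℕ) : A :=
  ∑ T with IsSSYT lam T, ∏ c : cells lam, (x (T c) + y (ysub (T c) c))

lemma factorialSchur_of_isEmpty (y : ℤ → A) (x : Fin 0 → A) (lam : Fin 0 → ℕ) :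
    factorialSchur y x lam = 1 := by
  have : IsEmpty (cells lam) := ⟨fun c => c.1.1.elim0⟩
  rw [factorialSchur, filter_true_of_mem fun T _ => ⟨isEmptyElim, isEmptyElim⟩]
  simp

lemma prod_cells_eq_mul_prod_strip (hnu : nu ∈ interlacing lam) {f : cells lam → A}
    {g : Fin (n + 1) × ℕ → A} (hfg : ∀ c ∉ Set.range (inclCell hnu), f c = g c) :
    ∏ c, f c = (∏ c, f (inclCell hnu c)) *
      ∏ i, ∏ k ∈ Ico (appendZero nu i) (lam i), g (i, k) := by
  have inner : ∏ c, f (inclCell hnu c) =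
      ∏ c, if c ∈ Set.range (inclCell hnu) then f c else 1 :=
    Fintype.prod_of_injective _ (inclCell_injective hnu) _ _ (fun c hc => if_neg hc)
      fun c => (if_pos ⟨c, rfl⟩).symm
  have strip : ∏ i, ∏ k ∈ Ico (appendZero nu i) (lam i), g (i, k) =
      ∏ c : cells lam, if c ∈ Set.range (inclCell hnu) then 1 else g c := by
    simp only [mem_range_inclCell]
    rw [prod_cells lam fun c => if c.2 < appendZero nu c.1 then 1 else g c]
    refine Fintype.prod_congr _ _ fun i => ?_
    rw [prod_ite, prod_const_one, one_mul]
    refine prod_congr ?_ fun _ _ => rfl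
    ext k
    simp [and_comm]
  rw [inner, strip, ← prod_mul_distrib]
  refine Fintype.prod_congr _ _ fun c => ?_
  split_ifs with hc
  · rw [mul_one]
  · rw [one_mul, hfg c hc]

/-- The weight of the cells of `lam / nu` filled with the maximal entry, whose variable is `z`.
The entry in row `i` (0-based) and column `k` contributes `z + y_{k + n - i + 1}`. -/
def stripWeight (y : ℤ → A) (z : A) (lam : Fin (n + 1) → ℕ) (nu : Fin n → ℕ) : A :=
  ∏ i : Fin (n + 1),
    factProd y z (appendZero nu i + (n - i)) (lam i + (n - i))

lemma prod_strip_eq_stripWeight (y : ℤ → A) (z : A) (lam : Fin (n + 1) → ℕ) (nu : Fin n → ℕ) :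
    ∏ i, ∏ k ∈ Ico (appendZero nu i) (lam i),
      (z + y (ysub (Fin.last n) (i, k))) = stripWeight y z lam nu := by
  refine Fintype.prod_congr _ _ fun i => ?_
  rw [factProd, ← prod_Ico_add']
  refine prod_congr rfl fun k _ => ?_
  have index_eq : ysub (Fin.last n) (i, k) = ((k + (n - i) : ℕ) : ℤ) + 1 := by
    simp only [ysub, Fin.val_last]
    omega
  rw [index_eq]

lemma sum_isSSYT_innerShape_eq (y : ℤ → A) (x : Fin (n + 1) → A) (hlam : IsPartition lam)
    (hnu : nu ∈ interlacing lam) :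
    ∑ T with IsSSYT lam T ∧ innerShape T = nu, ∏ c : cells lam, (x (T c) + y (ysub (T c) c)) =
      stripWeight y (x (Fin.last n)) lam nu * factorialSchur y (Fin.init x) nu := by
  rw [factorialSchur, mul_sum]
  refine (sum_nbij (extendTableau hnu) (fun T hT => ?_) (extendTableau_injective hnu).injOn
    (fun T hT => ?_) fun T _ => ?_).symm
  · simpa [isSSYT_extendTableau_iff hlam, innerShape_extendTableau] using hT
  · obtain ⟨hT, hshape⟩ : IsSSYT lam T ∧ innerShape T = nu := by simpa using hT
    obtain ⟨T, rfl⟩ := exists_extendTableau_eq hlam hnu hT hshape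
    exact ⟨T, by simpa [isSSYT_extendTableau_iff hlam] using hT, rfl⟩
  · rw [prod_cells_eq_mul_prod_strip hnu
      (g := fun c => x (Fin.last n) + y (ysub (Fin.last n) c))
      fun c hc => by rw [extendTableau_of_notMem hnu T hc],
      prod_strip_eq_stripWeight, mul_comm]
    simp only [extendTableau_inclCell]
    rfl

/-- The branching rule: deleting the maximal entries of a tableau leaves one with an interlacing
shape, and the deleted cells form a horizontal strip. -/
lemma factorialSchur_succ (y : ℤ → A) (x : Fin (n + 1) → A) (hlam : IsPartition lam) :
    factorialSchur y x lam = ∑ nu ∈ interlacing lam,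
      stripWeight y (x (Fin.last n)) lam nu * factorialSchur y (Fin.init x) nu := by
  rw [factorialSchur, ← sum_fiberwise_of_maps_to (g := innerShape) (t := interlacing lam)
    fun T hT => innerShape_mem_interlacing hlam (mem_filter.1 hT).2]
  refine sum_congr rfl fun nu hnu => ?_
  rw [filter_filter, sum_isSSYT_innerShape_eq y x hlam hnu]

end Branching

section Bialternant

variable {n : ℕ}

/-- The strictly decreasing sequence `lam + δ`, where `δ = (n - 1, …, 1, 0)`. -/
def addStaircase (lam : Fin n → ℕ) (i : Fin n) : ℕ := lam i + (n - 1 - i)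

lemma addStaircase_injective : Function.Injective (addStaircase (n := n)) :=
  fun lam mu h => funext fun i => by simpa [addStaircase] using congrFun h i

lemma IsPartition.strictAnti_addStaircase {lam : Fin n → ℕ} (hlam : IsPartition lam) :
    StrictAnti (addStaircase lam) := fun i j hij => by
  have := hlam hij.le
  simp only [addStaircase]
  omega

lemma image_addStaircase_interlacing (lam : Fin (n + 1) → ℕ) :
    (interlacing lam).image addStaircase = Fintype.piFinset fun i : Fin n =>
      Ico (addStaircase lam i.succ) (addStaircase lam i.castSucc) := by
  ext m
  simp only [mem_image, mem_interlacing, Fintype.mem_piFinset, mem_Ico, addStaircase,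
    Fin.val_succ, Fin.val_castSucc]
  constructor
  · rintro ⟨nu, hnu, rfl⟩ i
    have := hnu i
    simp only [addStaircase]
    omega
  · refine fun hm => ⟨fun i => m i - (n - 1 - i), fun i => ?_, funext fun i => ?_⟩ <;>
    · have := hm i
      simp only [addStaircase]
      omega

lemma stripWeight_eq_mul_prod {A : Type*} [CommSemiring A] (y : ℤ → A) (z : A)
    (lam : Fin (n + 1) → ℕ) (nu : Fin n → ℕ) :
    stripWeight y z lam nu = factPow y z (addStaircase lam (Fin.last n)) *
      ∏ i : Fin n, factProd y z (addStaircase nu i + 1) (addStaircase lam i.castSucc) := by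
  rw [stripWeight, Fin.prod_univ_castSucc, mul_comm]
  congr 1
  · simp [addStaircase]
  · refine Fintype.prod_congr _ _ fun i => ?_
    have start_eq : nu i + (n - i) = addStaircase nu i + 1 := by
      simp only [addStaircase]
      omega
    simp [start_eq, addStaircase]

/-- The bialternant formula: both sides obey the same recursion in the number of variables, with
`addStaircase` matching the sequences interlacing with `lam` to those in `factAlternant_succ`. -/
theorem vandermondeProd_mul_factorialSchur {A : Type*} [CommRing A] (y : ℤ → A) (x : Fin n → A)
    {lam : Fin n → ℕ} (hlam : IsPartition lam) :
    vandermondeProd x * factorialSchur y x lam = factAlternant y x (addStaircase lam) := by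
  induction n with
  | zero => simp [vandermondeProd, factAlternant, factorialSchur_of_isEmpty]
  | succ n ih =>
    rw [factAlternant_succ y x hlam.strictAnti_addStaircase.antitone,
      ← image_addStaircase_interlacing, sum_image addStaircase_injective.injOn,
      vandermondeProd_succ, factorialSchur_succ y x hlam, mul_assoc, mul_sum]
    congr 1
    refine sum_congr rfl fun nu hnu => ?_
    rw [← ih _ (isPartition_of_mem_interlacing hnu), ← stripWeight_eq_mul_prod, mul_left_comm]

end Bialternant

section Coefficients

variable {R : Type*} [CommRing R] {n : ℕ}

lemma coeff_prod_aeval_X {ι : Type*} [Fintype ι] (f : ι → Polynomial R) (d : ι →₀ ℕ) :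
    coeff d (∏ i, Polynomial.aeval (X i : MvPolynomial ι R) (f i)) = ∏ i, (f i).coeff (d i) := by
  have expand (i : ι) : Polynomial.aeval (X i : MvPolynomial ι R) (f i) =
      ∑ k ∈ (f i).support, C ((f i).coeff k) * X i ^ k := by
    rw [Polynomial.aeval_def, Polynomial.eval₂_eq_sum, Polynomial.sum, algebraMap_eq]
  have prod_eq_monomial (k : ι → ℕ) :
      ∏ i, (C ((f i).coeff (k i)) * X i ^ k i : MvPolynomial ι R) =
        monomial (Finsupp.equivFunOnFinite.symm k) (∏ i, (f i).coeff (k i)) := by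
    rw [prod_mul_distrib, monomial_eq, map_prod, Finsupp.prod_fintype _ _ fun _ => pow_zero _]
    simp
  simp only [expand, prod_univ_sum, prod_eq_monomial, coeff_sum, coeff_monomial,
    Equiv.symm_apply_eq]
  rw [sum_ite_eq']
  split_ifs with hd
  · rfl
  · obtain ⟨i, hi⟩ : ∃ i, (f i).coeff (d i) = 0 := by simpa using hd
    exact (prod_eq_zero (mem_univ i) hi).symm

lemma coeff_det_aeval_X {ι : Type*} [Fintype ι] [DecidableEq ι] (f : ι → Polynomial R)
    (d : ι →₀ ℕ) :
    coeff d (Matrix.of fun i j => Polynomial.aeval (X j : MvPolynomial ι R) (f i)).det =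
      (Matrix.of fun i j => (f i).coeff (d j)).det := by
  simp only [Matrix.det_apply, coeff_sum, Units.smul_def, coeff_smul, Matrix.of_apply]
  exact sum_congr rfl fun σ _ => congrArg _ (coeff_prod_aeval_X (fun i => f (σ i)) d)

lemma coeff_factAlternant (y : ℤ → R) (l : Fin n → ℕ) (d : Fin n →₀ ℕ) :
    coeff d (factAlternant (fun k => C (y k)) X l) =
      (Matrix.of fun i j =>
        (factPow (fun k => Polynomial.C (y k)) Polynomial.X (l i)).coeff (d j)).det := by
  have entry_eq (i j : Fin n) : factPow (fun k => C (y k)) (X j) (l i) =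
      Polynomial.aeval (X j : MvPolynomial (Fin n) R)
        (factPow (fun k => Polynomial.C (y k)) Polynomial.X (l i)) := by
    rw [← AlgHom.coe_toRingHom, map_factPow]
    simp [algebraMap_eq]
  simp only [factAlternant, entry_eq, coeff_det_aeval_X]

lemma det_ite_eq_of_strictAnti {l d : Fin n → ℕ} (hl : StrictAnti l) (hd : StrictAnti d) :
    (Matrix.of fun i j => if d j = l i then (1 : R) else 0).det = if l = d then 1 else 0 := by
  split_ifs with h
  · subst h
    convert! Matrix.det_one (n := Fin n) (R := R) using 2
    ext i j
    simp [Matrix.one_apply, hl.injective.eq_iff, eq_comm]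
  · obtain ⟨i, hi⟩ : ∃ i, ∀ j, d j ≠ l i := by
      by_contra! hall
      choose σ hσ using hall
      have σ_strictMono : StrictMono σ := fun i j hij => by
        rw [← hd.lt_iff_gt, hσ, hσ]
        exact hl hij
      exact h (funext fun i => by rw [← hσ i, σ_strictMono.apply_eq])
    exact Matrix.det_eq_zero_of_row_eq_zero i fun j => if_neg (hi j)

lemma coeff_factPow_X (p k : ℕ) :
    (factPow (fun j => Polynomial.C (X j : MvPolynomial ℤ ℤ)) Polynomial.X p).coeff k =
      eY p (p - k) := by
  set indices : Finset ℤ := (range p).image fun j : ℕ => (j + 1 : ℤ) with h_indices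
  have card_indices : #indices = p := by
    rw [card_image_of_injective _ fun a b h => by simpa using h, card_range]
  have factPow_eq : factPow (fun j => Polynomial.C (X j : MvPolynomial ℤ ℤ)) Polynomial.X p =
      ∏ j ∈ indices, (Polynomial.X + Polynomial.C (X j)) := by
    rw [prod_image fun a _ b _ h => by simpa using h, factPow, factProd, range_eq_Ico]
  -- In `eY`, `range p` is coerced to `Finset ℤ` before the image is taken.
  have eY_eq (d : ℕ) : eY p d = ∑ s ∈ powersetCard d indices, ∏ j ∈ s, X j := by
    rw [eY, if_pos d.cast_nonneg, Int.toNat_natCast]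
    congr 2
    ext j
    suffices (∃ a < p, (a : ℤ) = j + -1) ↔ ∃ a < p, (a : ℤ) + 1 = j by
      simpa [h_indices, Finset.bind_def] using this
    simp only [eq_add_neg_iff_add_eq]
  rw [factPow_eq]
  rcases le_or_gt k p with hk | hk
  · rw [prod_X_add_C_coeff _ _ (hk.trans_eq card_indices.symm), card_indices, ← eY_eq,
      Nat.cast_sub hk]
  · rw [eY, if_neg (by omega)]
    apply Polynomial.coeff_eq_zero_of_natDegree_lt
    rw [Polynomial.natDegree_prod_of_monic _ _ fun j _ => Polynomial.monic_X_add_C _]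
    simpa [card_indices] using hk

end Coefficients

section SchurCoefficients

variable {n : ℕ}

/-- The coefficient of `x^(mu + δ)` in `∏_{j < i} (x_j - x_i) * f`. On symmetric `f` this is the
coefficient of `s_mu` in the expansion of `f` into Schur polynomials. -/
noncomputable def schurCoeff (mu : Fin n → ℕ) :
    MvPolynomial (Fin n ⊕ ℤ) ℤ →+ MvPolynomial ℤ ℤ :=
  (coeffAddMonoidHom (Finsupp.equivFunOnFinite.symm (addStaircase mu))).comp <|
    (AddMonoidHom.mulLeft (vandermondeProd X)).comp
      (sumAlgEquiv ℤ (Fin n) ℤ : MvPolynomial (Fin n ⊕ ℤ) ℤ →+ _)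

lemma schurCoeff_apply (mu : Fin n → ℕ) (f : MvPolynomial (Fin n ⊕ ℤ) ℤ) :
    schurCoeff mu f = coeff (Finsupp.equivFunOnFinite.symm (addStaircase mu))
      (vandermondeProd X * sumAlgEquiv ℤ (Fin n) ℤ f) := rfl

lemma schurCoeff_rename_mul (mu : Fin n → ℕ) (p : MvPolynomial ℤ ℤ)
    (f : MvPolynomial (Fin n ⊕ ℤ) ℤ) :
    schurCoeff mu (rename Sum.inr p * f) = p * schurCoeff mu f := by
  have rename_eq : sumAlgEquiv ℤ (Fin n) ℤ (rename Sum.inr p) = C p :=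
    DFunLike.congr_fun (sumAlgEquiv_comp_rename_inr ℤ (Fin n) ℤ) p
  rw [schurCoeff_apply, map_mul, rename_eq, mul_left_comm, coeff_C_mul, schurCoeff_apply]

lemma sumAlgEquiv_factSchurN (lam : Fin n → ℕ) :
    sumAlgEquiv ℤ (Fin n) ℤ (factSchurN n lam) =
      factorialSchur (fun k => C (X k)) X lam := by
  simp [factSchurN, factorialSchur]

lemma sumAlgEquiv_schurN (lam : Fin n → ℕ) :
    sumAlgEquiv ℤ (Fin n) ℤ (schurN n lam) = factorialSchur (fun _ => C 0) X lam := by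
  simp [schurN, factorialSchur]

lemma schurCoeff_schurN {lam mu : Fin n → ℕ} (hlam : IsPartition lam) (hmu : IsPartition mu) :
    schurCoeff mu (schurN n lam) = if lam = mu then 1 else 0 := by
  rw [schurCoeff_apply, sumAlgEquiv_schurN, vandermondeProd_mul_factorialSchur _ _ hlam,
    coeff_factAlternant (fun _ => 0)]
  simp only [map_zero, factPow_const_zero, Polynomial.coeff_X_pow,
    Finsupp.equivFunOnFinite_symm_apply_apply]
  rw [det_ite_eq_of_strictAnti hlam.strictAnti_addStaircase hmu.strictAnti_addStaircase]
  simp only [addStaircase_injective.eq_iff]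

lemma schurCoeff_factSchurN {lam : Fin n → ℕ} (hlam : IsPartition lam) (mu : Fin n → ℕ) :
    schurCoeff mu (factSchurN n lam) = (Matrix.of fun i j : Fin n =>
      eY (lam i + (n - 1 - i)) (lam i - mu j - (i : ℕ) + (j : ℕ))).det := by
  rw [schurCoeff_apply, sumAlgEquiv_factSchurN, vandermondeProd_mul_factorialSchur _ _ hlam,
    coeff_factAlternant]
  simp only [coeff_factPow_X, Finsupp.equivFunOnFinite_symm_apply_apply]
  congr! 4 with i j
  simp only [addStaircase]
  congr 1
  omega

end SchurCoefficients

/-- Proposition 4.1(i), Macdonald's formula: the coefficient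
`c_{λ,n}^μ(y)` in `s_λ(x_{(n)}|y) = Σ_μ c_{λ,n}^μ(y) s_μ(x_{(n)})` is
`det( e_{λ_i - μ_j - i + j}(y_1, …, y_{λ_i + n - i}) )_{1 ≤ i,j ≤ n}`. -/
theorem change_of_basis_c_det (n : ℕ) (hn : 1 ≤ n)
    (lam : Fin n → ℕ) (hlam : IsPartition lam)
    (c : (Fin n → ℕ) →₀ MvPolynomial ℤ ℤ)
    (hsupp : ∀ μ, c μ ≠ 0 → IsPartition μ)
    (hexp : factSchurN n lam = c.sum fun μ p => rename Sum.inr p * schurN n μ)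
    (mu : Fin n → ℕ) (hmu : IsPartition mu) :
    c mu = Matrix.det (Matrix.of fun i j : Fin n =>
      eY (lam i + (n - 1 - (i : ℕ)))
        ((lam i : ℤ) - (mu j : ℤ) - (i : ℕ) + (j : ℕ))) := by
  have schurCoeff_term : ∀ μ ∈ c.support,
      schurCoeff mu (rename Sum.inr (c μ) * schurN n μ) = if μ = mu then c μ else 0 := by
    intro μ hμ
    rw [schurCoeff_rename_mul, schurCoeff_schurN (hsupp μ (Finsupp.mem_support_iff.1 hμ)) hmu,
      mul_ite, mul_one, mul_zero]
  calc c mu = ∑ μ ∈ c.support, if μ = mu then c μ else 0 := by simp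
    _ = schurCoeff mu (factSchurN n lam) := by
      rw [hexp, Finsupp.sum, map_sum, sum_congr rfl schurCoeff_term]
    _ = _ := schurCoeff_factSchurN hlam mu
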